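/- arXiv:2309.07501 — 3 statements merged into one kernel-verified Lean document; each statement's English description precedes it below -/
import Mathlib

section
/- The fundamental solution S_n of the heat equation, extended by 0 for t ≤ 0, is infinitely differentiable away from the space-time origin: the function S_n is C^∞ on the open set (ℝ × ℝⁿ) \ {(0,0)}. In particular, for every x₀ ≠ 0 it is C^∞ in a neighborhood of the point (0, x₀), across t = 0. -/
/-- The fundamental solution of the heat equation. -/
noncomputable def Sn (n : ℕ) (t : ℝ) (x : EuclideanSpace ℝ (Fin n)) : ℝ :=
  if 0 < t then (4 * Real.pi * t) ^ (-(n : ℝ) / 2) * Real.exp (-‖x‖ ^ 2 / (4 * t)) else 0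

open Filter Topology Set in
theorem glue_rpow_tendsto (a : ℝ) :
    Tendsto (fun x : ℝ => x ^ a * expNegInvGlue x) (𝓝 0) (𝓝 0) := by
  simp only [expNegInvGlue, mul_ite, mul_zero]
  refine tendsto_const_nhds.if ?_
  simp only [not_le]
  have h := (tendsto_rpow_mul_exp_neg_mul_atTop_nhds_zero (-a) 1 one_pos).comp
    (tendsto_inv_nhdsGT_zero (𝕜 := ℝ))
  refine h.congr' <| mem_of_superset self_mem_nhdsWithin fun x hx => ?_
  have hx' : (0 : ℝ) < x := hx
  simp [Real.inv_rpow hx'.le, Real.rpow_neg hx'.le]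

open Filter Topology Set in
theorem glue_rpow_hasDerivAt (a x : ℝ) :
    HasDerivAt (fun x : ℝ => x ^ a * expNegInvGlue x)
      (a * (x ^ (a - 1) * expNegInvGlue x) + x ^ (a - 2) * expNegInvGlue x) x := by
  rcases lt_trichotomy x 0 with hx | rfl | hx
  · rw [expNegInvGlue.zero_of_nonpos hx.le]
    simp only [mul_zero, add_zero]
    refine (hasDerivAt_const _ 0).congr_of_eventuallyEq ?_
    filter_upwards [gt_mem_nhds hx] with y hy
    rw [expNegInvGlue.zero_of_nonpos hy.le, mul_zero]
  · rw [expNegInvGlue.zero]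
    simp only [mul_zero, add_zero]
    rw [hasDerivAt_iff_tendsto_slope]
    refine ((glue_rpow_tendsto (a - 1)).mono_left inf_le_left).congr fun x => ?_
    rcases le_or_gt x 0 with hx | hx
    · simp [slope_def_field, expNegInvGlue.zero_of_nonpos hx]
    · simp [slope_def_field, Real.rpow_sub_one hx.ne']
      ring
  · have h1 := (Real.hasDerivAt_rpow_const (p := a) (Or.inl hx.ne')).mul
      ((hasDerivAt_inv hx.ne').neg.exp)
    refine (h1.congr_of_eventuallyEq ?_).congr_deriv ?_
    · filter_upwards [lt_mem_nhds hx] with y hy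
      simp [expNegInvGlue, hy.not_ge]
    · have h2 : x ^ (a - 2) = x ^ a / x ^ 2 := by
        rw [Real.rpow_sub hx]; norm_num
      simp [expNegInvGlue, hx.not_ge, h2]
      ring

theorem glue_rpow_contDiff (m : ℕ) (a : ℝ) :
    ContDiff ℝ m (fun x : ℝ => x ^ a * expNegInvGlue x) := by
  induction m generalizing a with
  | zero =>
    exact contDiff_zero.2 (continuous_iff_continuousAt.2
      fun x => (glue_rpow_hasDerivAt a x).continuousAt)
  | succ m ihm =>
    rw [show ((m + 1 : ℕ) : WithTop ℕ∞) = m + 1 from rfl]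
    refine contDiff_succ_iff_deriv.2
      ⟨fun x => (glue_rpow_hasDerivAt a x).differentiableAt, by simp, ?_⟩
    have h : deriv (fun x : ℝ => x ^ a * expNegInvGlue x) = fun x =>
        a * (x ^ (a - 1) * expNegInvGlue x) + x ^ (a - 2) * expNegInvGlue x :=
      funext fun x => (glue_rpow_hasDerivAt a x).deriv
    rw [h]
    exact (contDiff_const.mul (ihm (a - 1))).add (ihm (a - 2))

theorem glue_rpow_contDiff_top (a : ℝ) :
    ContDiff ℝ (⊤ : ℕ∞) (fun x : ℝ => x ^ a * expNegInvGlue x) :=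
  contDiff_all_iff_nat.2 (fun m => glue_rpow_contDiff m a) _

theorem Sn_eq_glue (n : ℕ) (t : ℝ) (x : EuclideanSpace ℝ (Fin n)) (hx : x ≠ 0) :
    Sn n t x = (Real.pi * ‖x‖ ^ 2) ^ (-(n : ℝ) / 2) *
      ((4 * t / ‖x‖ ^ 2) ^ (-(n : ℝ) / 2) * expNegInvGlue (4 * t / ‖x‖ ^ 2)) := by
  have hn : 0 < ‖x‖ ^ 2 := pow_pos (norm_pos_iff.2 hx) 2
  unfold Sn
  split_ifs with ht
  · have hs : 0 < 4 * t / ‖x‖ ^ 2 := by positivity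
    rw [← mul_assoc, ← Real.mul_rpow (by positivity) hs.le]
    simp only [expNegInvGlue, hs.not_ge, if_false]
    congr 2
    · field_simp
    · rw [inv_div, neg_div]
  · rw [expNegInvGlue.zero_of_nonpos]
    · simp
    · exact div_nonpos_of_nonpos_of_nonneg (by linarith) hn.le

open Filter Topology in
theorem Sn_contDiffAt (n : ℕ) (p : ℝ × EuclideanSpace ℝ (Fin n)) (hp : p ≠ (0, 0)) :
    ContDiffAt ℝ (⊤ : ℕ∞) (fun p : ℝ × EuclideanSpace ℝ (Fin n) => Sn n p.1 p.2) p := by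
  have hnorm : ContDiffAt ℝ (⊤ : ℕ∞)
      (fun p : ℝ × EuclideanSpace ℝ (Fin n) => ‖p.2‖ ^ 2) p :=
    (contDiff_snd.norm_sq ℝ).contDiffAt
  have hfst : ContDiffAt ℝ (⊤ : ℕ∞)
      (fun p : ℝ × EuclideanSpace ℝ (Fin n) => p.1) p := contDiffAt_fst
  by_cases hx : p.2 = 0
  · have ht : p.1 ≠ 0 := fun h => hp (Prod.ext h hx)
    rcases lt_or_gt_of_ne ht with ht | ht
    · refine (contDiffAt_const (c := (0 : ℝ))).congr_of_eventuallyEq ?_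
      filter_upwards [continuous_fst.continuousAt.eventually_lt_const ht] with q hq
      simp [Sn, hq.le]
    · have h : ContDiffAt ℝ (⊤ : ℕ∞) (fun p : ℝ × EuclideanSpace ℝ (Fin n) =>
          (4 * Real.pi * p.1) ^ (-(n : ℝ) / 2) * Real.exp (-‖p.2‖ ^ 2 / (4 * p.1))) p := by
        refine ContDiffAt.mul ?_ ?_
        · exact (contDiffAt_const.mul hfst).rpow_const_of_ne (by positivity)
        · exact (hnorm.neg.div (contDiffAt_const.mul hfst) (by positivity)).exp
      refine h.congr_of_eventuallyEq ?_
      filter_upwards [continuous_fst.continuousAt.eventually_const_lt ht] with q hq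
      simp [Sn, hq]
  · have hn : ‖p.2‖ ^ 2 ≠ 0 := pow_ne_zero 2 (norm_ne_zero_iff.2 hx)
    have h : ContDiffAt ℝ (⊤ : ℕ∞) (fun p : ℝ × EuclideanSpace ℝ (Fin n) =>
        (Real.pi * ‖p.2‖ ^ 2) ^ (-(n : ℝ) / 2) *
        ((4 * p.1 / ‖p.2‖ ^ 2) ^ (-(n : ℝ) / 2) * expNegInvGlue (4 * p.1 / ‖p.2‖ ^ 2))) p := by
      refine ContDiffAt.mul ?_ ?_
      · exact (contDiffAt_const.mul hnorm).rpow_const_of_ne (mul_ne_zero Real.pi_ne_zero hn)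
      · exact (glue_rpow_contDiff_top (-(n : ℝ) / 2)).contDiffAt.comp p
          ((contDiffAt_const.mul hfst).div hnorm hn)
    refine h.congr_of_eventuallyEq ?_
    filter_upwards [continuous_snd.continuousAt.eventually_ne hx] with q hq
    exact Sn_eq_glue n q.1 q.2 hq

/-- The fundamental solution `S_n`, extended by `0` for `t ≤ 0`, is `C^∞` on
`(ℝ × ℝⁿ) \ {(0,0)}`; in particular, for every `x₀ ≠ 0` it is `C^∞` in a neighborhood of
`(0, x₀)`, across `t = 0`. -/
theorem heat_kernel_smooth_off_origin (n : ℕ) (hn : 2 ≤ n) :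
    ContDiffOn ℝ (⊤ : ℕ∞) (fun p : ℝ × EuclideanSpace ℝ (Fin n) => Sn n p.1 p.2)
      {p : ℝ × EuclideanSpace ℝ (Fin n) | p ≠ (0, 0)} ∧
    ∀ x₀ : EuclideanSpace ℝ (Fin n), x₀ ≠ 0 →
      ∃ U ∈ nhds ((0 : ℝ), x₀),
        ContDiffOn ℝ (⊤ : ℕ∞) (fun p : ℝ × EuclideanSpace ℝ (Fin n) => Sn n p.1 p.2) U := by
  refine ⟨fun p hp => (Sn_contDiffAt n p hp).contDiffWithinAt, fun x₀ hx₀ => ?_⟩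
  refine ⟨{p : ℝ × EuclideanSpace ℝ (Fin n) | p ≠ (0, 0)}, ?_,
    fun p hp => (Sn_contDiffAt n p hp).contDiffWithinAt⟩
  exact isOpen_ne.mem_nhds (fun h => hx₀ (congrArg Prod.snd h))
end

section
/- The fundamental solution S_n of the heat equation is not real analytic at points of the hyperplane t = 0: for every x₀ ∈ ℝⁿ with x₀ ≠ 0, the function S_n : ℝ × ℝⁿ → ℝ is not real-analytic at the point (0, x₀). -/
/-- The fundamental solution `S_n` of the heat equation is not real analytic at points of
the hyperplane `t = 0`: for every `x₀ ≠ 0`, the map `(t,x) ↦ S_n(t,x)` is not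
real-analytic at `(0, x₀)`. -/
theorem heat_kernel_not_analytic (n : ℕ) (hn : 2 ≤ n)
    (x₀ : EuclideanSpace ℝ (Fin n)) (hx₀ : x₀ ≠ 0) :
    ¬ AnalyticAt ℝ (fun p : ℝ × EuclideanSpace ℝ (Fin n) => Sn n p.1 p.2)
        ((0 : ℝ), x₀) := by
  intro h
  have hg : AnalyticAt ℝ (fun t : ℝ => (t, x₀)) 0 := by fun_prop
  have h1 : AnalyticAt ℝ (fun t : ℝ => Sn n t x₀) 0 :=
    AnalyticAt.fun_comp (f := fun t : ℝ => (t, x₀)) (x := (0 : ℝ))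
      (g := fun p : ℝ × EuclideanSpace ℝ (Fin n) => Sn n p.1 p.2) h hg
  rcases h1.eventually_eq_zero_or_eventually_ne_zero with h2 | h2
  · obtain ⟨t, ht, htpos⟩ :=
      ((h2.filter_mono nhdsWithin_le_nhds).and
        (self_mem_nhdsWithin : Set.Ioi (0 : ℝ) ∈ nhdsWithin 0 (Set.Ioi 0))).exists
    have htpos : 0 < t := htpos
    have hpos : 0 < Sn n t x₀ := by
      unfold Sn
      rw [if_pos htpos]
      positivity
    exact hpos.ne' ht
  · have h3 : ∀ᶠ t in nhdsWithin (0 : ℝ) (Set.Iio 0), Sn n t x₀ ≠ 0 :=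
      h2.filter_mono (nhdsWithin_mono _ fun t ht => ne_of_lt ht)
    obtain ⟨t, ht, htneg⟩ :=
      (h3.and (self_mem_nhdsWithin : Set.Iio (0 : ℝ) ∈ nhdsWithin 0 (Set.Iio 0))).exists
    exact ht (if_neg (not_lt.mpr (le_of_lt htneg)))
end

section
/- Smoothness of an operator-valued map follows from joint smoothness of its evaluation: let E, X, Y be real Banach spaces, let U be an open subset of E, and let G : E → L(X, Y) be a map into the space of continuous linear operators from X to Y (equipped with the operator norm). If the evaluation map (e, x) ↦ G(e)(x) is of class C^∞ on U × X, then G is of class C^∞ on U as a map into L(X, Y). -/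
/-- Smoothness of an operator-valued map follows from joint smoothness of its evaluation:
if `E, X, Y` are real Banach spaces, `U ⊆ E` is open, `G : E → L(X,Y)`, and the
evaluation map `(e, x) ↦ G(e)(x)` is `C^∞` on `U × X`, then `G` is `C^∞` on `U` as a map
into `L(X,Y)` with the operator norm. -/
theorem smooth_operator_valued_of_smooth_eval
    {E X Y : Type*}
    [NormedAddCommGroup E] [NormedSpace ℝ E] [CompleteSpace E]
    [NormedAddCommGroup X] [NormedSpace ℝ X] [CompleteSpace X]
    [NormedAddCommGroup Y] [NormedSpace ℝ Y] [CompleteSpace Y]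
    (U : Set E) (hU : IsOpen U) (G : E → X →L[ℝ] Y)
    (h : ContDiffOn ℝ (⊤ : ℕ∞) (fun p : E × X => G p.1 p.2)
      (U ×ˢ (Set.univ : Set X))) :
    ContDiffOn ℝ (⊤ : ℕ∞) G U := by
  have hO : IsOpen (U ×ˢ (Set.univ : Set X)) := hU.prod isOpen_univ
  have h1 : ContDiffOn ℝ (⊤ : ℕ∞) (fderiv ℝ (fun p : E × X => G p.1 p.2))
      (U ×ˢ (Set.univ : Set X)) :=
    ((contDiffOn_infty_iff_fderiv_of_isOpen hO).1 h).2
  have h2 : ContDiffOn ℝ (⊤ : ℕ∞)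
      (fun e : E => fderiv ℝ (fun p : E × X => G p.1 p.2) (e, (0 : X))) U :=
    h1.comp (f := fun e : E => (e, (0 : X))) (by fun_prop)
      (fun e he => ⟨he, Set.mem_univ _⟩)
  have h3 : ContDiffOn ℝ (⊤ : ℕ∞)
      (fun e : E => (fderiv ℝ (fun p : E × X => G p.1 p.2) (e, (0 : X))).comp
        (ContinuousLinearMap.inr ℝ E X)) U :=
    h2.clm_comp contDiffOn_const
  refine h3.congr fun e he => ?_
  have hd : DifferentiableAt ℝ (fun p : E × X => G p.1 p.2) (e, (0 : X)) :=
    (h.contDiffAt (hO.mem_nhds ⟨he, Set.mem_univ _⟩)).differentiableAt (by simp)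
  have hc : HasFDerivAt (fun x : X => G e x)
      ((fderiv ℝ (fun p : E × X => G p.1 p.2) (e, (0 : X))).comp
        (ContinuousLinearMap.inr ℝ E X)) 0 :=
    hd.hasFDerivAt.comp (f := fun x : X => (e, x)) 0 (hasFDerivAt_prodMk_right e 0)
  exact (G e).hasFDerivAt.unique hc
end
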